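/- Let f_{c_1}, …, f_{c_N} : ℝ^d → ℝ be differentiable functions with L-Lipschitz gradients, let α_{c_1}, …, α_{c_N} ∈ [0,1] with Σ_i α_{c_i} = 1, set f := Σ_i α_{c_i} f_{c_i}, and suppose for every w ∈ ℝ^d: Σ_{i=1}^{N} α_{c_i}‖∇f_{c_i}(w) − ∇f(w)‖² ≤ ε_g². Then for any integer κ ≥ 1 and any points u_i^τ, v^τ ∈ ℝ^d (1 ≤ i ≤ N, 0 ≤ τ < κ): Σ_{i=1}^{N} α_{c_i} ‖ Σ_{τ=0}^{κ−1} ( ∇f_{c_i}(u_i^τ) − Σ_{j=1}^{N} α_{c_j} ∇f_{c_j}(u_j^τ) ) ‖² ≤ 6 κ L² Σ_{i=1}^{N} Σ_{τ=0}^{κ−1} α_{c_i} ‖ u_i^τ − v^τ ‖² + 3 κ² ε_g². -/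

import Mathlib

open Finset

lemma aux_sum_sq {E : Type*} [NormedAddCommGroup E] (κ : ℕ) (a : ℕ → E) :
    ‖∑ τ ∈ range κ, a τ‖ ^ 2 ≤ κ * ∑ τ ∈ range κ, ‖a τ‖ ^ 2 := by
  have h1 : ‖∑ τ ∈ range κ, a τ‖ ≤ ∑ τ ∈ range κ, ‖a τ‖ := norm_sum_le _ _
  have h2 := sq_sum_le_card_mul_sum_sq (s := range κ) (f := fun τ => ‖a τ‖)
  rw [card_range] at h2
  exact (pow_le_pow_left₀ (norm_nonneg _) h1 2).trans h2

lemma aux_jensen {E : Type*} [NormedAddCommGroup E] [NormedSpace ℝ E] {N : ℕ}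
    (α : Fin N → ℝ) (h0 : ∀ i, 0 ≤ α i) (h1 : ∑ i, α i = 1) (x : Fin N → E) :
    ‖∑ j, α j • x j‖ ^ 2 ≤ ∑ j, α j * ‖x j‖ ^ 2 := by
  have a1 : ‖∑ j, α j • x j‖ ≤ ∑ j, α j * ‖x j‖ := by
    refine (norm_sum_le _ _).trans (le_of_eq (sum_congr rfl fun j _ => ?_))
    rw [norm_smul, Real.norm_of_nonneg (h0 j)]
  have a2 := Real.pow_arith_mean_le_arith_mean_pow univ α (fun j => ‖x j‖) (fun i _ => h0 i) h1
    (fun j _ => norm_nonneg _) 2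
  exact (pow_le_pow_left₀ (norm_nonneg _) a1 2).trans a2

lemma aux_three {E : Type*} [NormedAddCommGroup E] (x m h : E) :
    ‖x - m + h‖ ^ 2 ≤ 3 * ‖x‖ ^ 2 + 3 * ‖m‖ ^ 2 + 3 * ‖h‖ ^ 2 := by
  have h1 : ‖x - m + h‖ ≤ ‖x‖ + ‖m‖ + ‖h‖ :=
    (norm_add_le _ _).trans (by gcongr; exact norm_sub_le _ _)
  have h2 := pow_le_pow_left₀ (norm_nonneg _) h1 2
  nlinarith [sq_nonneg (‖x‖ - ‖m‖), sq_nonneg (‖x‖ - ‖h‖), sq_nonneg (‖m‖ - ‖h‖)]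

/-- Accumulated deviation of cluster gradients from their global weighted
average over `κ` steps is controlled by `6 κ L²` times the accumulated squared distances of
the cluster points to arbitrary reference points plus `3 κ² ε_g²`. -/
theorem cluster_gradient_drift_bound
    {d N : ℕ}
    (fc : Fin N → EuclideanSpace ℝ (Fin d) → ℝ)
    (αC : Fin N → ℝ)
    (hαC01 : ∀ i, αC i ∈ Set.Icc (0 : ℝ) 1)
    (hαCsum : ∑ i, αC i = 1)
    (f : EuclideanSpace ℝ (Fin d) → ℝ)
    (hf : ∀ x, f x = ∑ i, αC i * fc i x)
    (hfcdiff : ∀ i, Differentiable ℝ (fc i))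
    (L εg : ℝ) (hL : 0 < L)
    (hLip : ∀ i, LipschitzWith L.toNNReal (gradient (fc i)))
    (hdivg : ∀ x, ∑ i, αC i * ‖gradient (fc i) x - gradient f x‖ ^ 2 ≤ εg ^ 2)
    (κ : ℕ) (hκ : 1 ≤ κ)
    (u : Fin N → ℕ → EuclideanSpace ℝ (Fin d))
    (v : ℕ → EuclideanSpace ℝ (Fin d)) :
    ∑ i, αC i * ‖∑ τ ∈ range κ, (gradient (fc i) (u i τ) -
        ∑ j, αC j • gradient (fc j) (u j τ))‖ ^ 2 ≤
      6 * κ * L ^ 2 * ∑ i, ∑ τ ∈ range κ, αC i * ‖u i τ - v τ‖ ^ 2 +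
        3 * (κ : ℝ) ^ 2 * εg ^ 2 := by
  have h0 : ∀ i, 0 ≤ αC i := fun i => (hαC01 i).1
  have hgrad : ∀ x, gradient f x = ∑ j, αC j • gradient (fc j) x := by
    intro x
    apply HasGradientAt.gradient
    have hff : f = fun x => ∑ i, αC i * fc i x := funext hf
    rw [hff, hasGradientAt_iff_hasFDerivAt, map_sum]
    apply HasFDerivAt.fun_sum
    intro i _
    have := ((hfcdiff i x).hasGradientAt.hasFDerivAt).const_mul (αC i)
    simpa using this
  have key : ∀ τ, ∑ i, αC i * ‖gradient (fc i) (u i τ) -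
        ∑ j, αC j • gradient (fc j) (u j τ)‖ ^ 2 ≤
        6 * L ^ 2 * ∑ i, αC i * ‖u i τ - v τ‖ ^ 2 + 3 * εg ^ 2 := by
    intro τ
    set x : Fin N → EuclideanSpace ℝ (Fin d) :=
      fun i => gradient (fc i) (u i τ) - gradient (fc i) (v τ) with hx
    set m := ∑ j, αC j • x j with hm
    have hJ : ‖m‖ ^ 2 ≤ ∑ j, αC j * ‖x j‖ ^ 2 := aux_jensen αC h0 hαCsum x
    have hxL : ∑ j, αC j * ‖x j‖ ^ 2 ≤ L ^ 2 * ∑ i, αC i * ‖u i τ - v τ‖ ^ 2 := by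
      rw [mul_sum]
      refine sum_le_sum fun j _ => ?_
      have h := (hLip j).dist_le_mul (u j τ) (v τ)
      rw [dist_eq_norm, dist_eq_norm, Real.coe_toNNReal _ hL.le] at h
      have h2 := pow_le_pow_left₀ (norm_nonneg _) h 2
      have h3 := mul_le_mul_of_nonneg_left h2 (h0 j)
      rw [mul_pow] at h3
      simp only [hx]
      linarith
    have hdec : ∀ i, gradient (fc i) (u i τ) - ∑ j, αC j • gradient (fc j) (u j τ)
        = x i - m + (gradient (fc i) (v τ) - gradient f (v τ)) := by
      intro i
      rw [hgrad, hm]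
      simp only [hx, smul_sub, sum_sub_distrib]
      abel
    have hA : ∑ i, αC i * ‖gradient (fc i) (u i τ) -
        ∑ j, αC j • gradient (fc j) (u j τ)‖ ^ 2 ≤
        ∑ i, (3 * (αC i * ‖x i‖ ^ 2) + αC i * (3 * ‖m‖ ^ 2)
          + 3 * (αC i * ‖gradient (fc i) (v τ) - gradient f (v τ)‖ ^ 2)) := by
      refine sum_le_sum fun i _ => ?_
      rw [hdec i]
      have := mul_le_mul_of_nonneg_left (aux_three (x i) m
        (gradient (fc i) (v τ) - gradient f (v τ))) (h0 i)
      linarith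
    rw [sum_add_distrib, sum_add_distrib, ← mul_sum, ← mul_sum, ← sum_mul, hαCsum] at hA
    have := hdivg (v τ)
    linarith
  calc _ ≤ ∑ i, αC i * (κ * ∑ τ ∈ range κ, ‖gradient (fc i) (u i τ) -
        ∑ j, αC j • gradient (fc j) (u j τ)‖ ^ 2) :=
        sum_le_sum fun i _ => mul_le_mul_of_nonneg_left (aux_sum_sq _ _) (h0 i)
    _ = κ * ∑ τ ∈ range κ, ∑ i, αC i * ‖gradient (fc i) (u i τ) -
        ∑ j, αC j • gradient (fc j) (u j τ)‖ ^ 2 := by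
        rw [sum_comm, mul_sum]
        refine sum_congr rfl fun i _ => ?_
        rw [← mul_sum]
        ring
    _ ≤ κ * ∑ τ ∈ range κ, (6 * L ^ 2 * ∑ i, αC i * ‖u i τ - v τ‖ ^ 2 + 3 * εg ^ 2) :=
        mul_le_mul_of_nonneg_left (sum_le_sum fun τ _ => key τ) (Nat.cast_nonneg _)
    _ = _ := by
        rw [sum_add_distrib, ← mul_sum, sum_comm, sum_const, card_range, nsmul_eq_mul]
        ring
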